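/- Let R be a ring in which every nonzero two-sided ideal contains a nonzero idempotent. Then the intersection of all prime two-sided ideals of R is zero; equivalently, R is a subdirect product of the quotient rings R/P taken over all prime two-sided ideals P. -/

import Mathlib

/-!
For an idempotent `e`, the set `{e}` is an m-system: `e * e * e = e`. As in commutative algebra,
a two-sided ideal which is maximal among those disjoint from a given m-system is prime, so each
m-system avoiding `0` is disjoint from some prime ideal, hence from the intersection of all primes.
In particular this intersection contains no nonzero idempotent.
-/

open TwoSidedIdeal

/-- An m-system, the noncommutative analogue of a multiplicatively closed set. It is not required
to be nonempty or to contain `1`. -/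
def IsMSystem {M : Type*} [Mul M] (S : Set M) : Prop :=
  ∀ a ∈ S, ∀ b ∈ S, ∃ r : M, a * r * b ∈ S

theorem isMSystem_singleton {M : Type*} [Mul M] {e : M} (he : IsIdempotentElem e) :
    IsMSystem ({e} : Set M) := by
  rintro _ rfl e rfl
  exact ⟨e, by rw [Set.mem_singleton_iff, he.eq, he.eq]⟩

section NonAssoc

variable {R : Type*} [NonUnitalNonAssocRing R]

/-- A prime two-sided ideal, in the elementwise form `a R b ⊆ P → a ∈ P ∨ b ∈ P`. The whole ring
is allowed; this does not affect intersections of primes. -/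
def IsPrimeTwoSided (P : TwoSidedIdeal R) : Prop :=
  ∀ a b : R, (∀ r : R, a * r * b ∈ P) → a ∈ P ∨ b ∈ P

theorem mem_sSup_twoSidedIdeal_of_directedOn {c : Set (TwoSidedIdeal R)} (hne : c.Nonempty)
    (hc : DirectedOn (· ≤ ·) c) {x : R} : x ∈ sSup c ↔ ∃ I ∈ c, x ∈ I := by
  obtain ⟨I₀, hI₀⟩ := hne
  let U : TwoSidedIdeal R := .mk' {z | ∃ I ∈ c, z ∈ I}
    ⟨I₀, hI₀, I₀.zero_mem⟩
    (by
      rintro u v ⟨I, hI, hu⟩ ⟨J, hJ, hv⟩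
      obtain ⟨K, hK, hIK, hJK⟩ := hc I hI J hJ
      exact ⟨K, hK, K.add_mem (hIK hu) (hJK hv)⟩)
    (fun ⟨I, hI, hu⟩ ↦ ⟨I, hI, I.neg_mem hu⟩)
    (fun ⟨I, hI, hv⟩ ↦ ⟨I, hI, I.mul_mem_left _ _ hv⟩)
    (fun ⟨I, hI, hu⟩ ↦ ⟨I, hI, I.mul_mem_right _ _ hu⟩)
  have mem_U {z : R} : z ∈ U ↔ ∃ I ∈ c, z ∈ I := mem_mk' ..
  have sSup_le_U : sSup c ≤ U := sSup_le fun I hI _ hz ↦ mem_U.2 ⟨I, hI, hz⟩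
  exact ⟨fun hx ↦ mem_U.1 (sSup_le_U hx), fun ⟨_, hI, hx⟩ ↦ le_sSup hI hx⟩

theorem exists_maximal_twoSidedIdeal_disjoint {S : Set R} {I : TwoSidedIdeal R}
    (hI : Disjoint (I : Set R) S) :
    ∃ P, I ≤ P ∧ Maximal (fun J : TwoSidedIdeal R ↦ Disjoint (J : Set R) S) P := by
  refine zorn_le_nonempty₀ {J : TwoSidedIdeal R | Disjoint (J : Set R) S} ?_ I hI
  refine fun c hcS hc J hJ ↦ ⟨sSup c, Set.disjoint_left.2 fun x hx ↦ ?_, fun _ ↦ le_sSup⟩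
  obtain ⟨K, hK, hxK⟩ := (mem_sSup_twoSidedIdeal_of_directedOn ⟨J, hJ⟩ hc.directedOn).1 hx
  exact Set.disjoint_left.1 (hcS hK) hxK

theorem exists_mem_of_maximal_twoSidedIdeal_disjoint {S : Set R} {P J : TwoSidedIdeal R}
    (hP : Maximal (fun J : TwoSidedIdeal R ↦ Disjoint (J : Set R) S) P) (hPJ : P ≤ J) {a : R}
    (haJ : a ∈ J) (haP : a ∉ P) : ∃ s ∈ J, s ∈ S :=
  Set.not_disjoint_iff.1 (hP.not_prop_of_gt (SetLike.lt_iff_le_and_exists.2 ⟨hPJ, a, haJ, haP⟩))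

end NonAssoc

section Assoc

variable {R : Type*} [NonUnitalRing R] {P : TwoSidedIdeal R}

/-- The left colon ideal `(P : R b)`, consisting of the `y` with `y R b ⊆ P`. Multiplying by `R b`
rather than by `b` is what makes it two-sided. -/
def leftColon (P : TwoSidedIdeal R) (b : R) : TwoSidedIdeal R :=
  .mk' {y | ∀ r, y * r * b ∈ P}
    (fun r ↦ by simpa only [zero_mul] using P.zero_mem)
    (fun hu hv r ↦ by simpa only [add_mul] using P.add_mem (hu r) (hv r))
    (fun hu r ↦ by simpa only [neg_mul] using P.neg_mem (hu r))
    (fun {u _} hv r ↦ by simpa only [mul_assoc] using P.mul_mem_left u _ (hv r))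
    (fun {_ v} hu r ↦ by simpa only [mul_assoc] using hu (v * r))

/-- The right colon ideal `(P : a R)`, consisting of the `y` with `a R y ⊆ P`. -/
def rightColon (P : TwoSidedIdeal R) (a : R) : TwoSidedIdeal R :=
  .mk' {y | ∀ r, a * r * y ∈ P}
    (fun r ↦ by simpa only [mul_zero] using P.zero_mem)
    (fun hu hv r ↦ by simpa only [mul_add] using P.add_mem (hu r) (hv r))
    (fun hu r ↦ by simpa only [mul_neg] using P.neg_mem (hu r))
    (fun {u _} hv r ↦ by simpa only [mul_assoc] using hv (r * u))
    (fun {_ v} hu r ↦ by simpa only [mul_assoc] using P.mul_mem_right _ v (hu r))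

theorem mem_leftColon {b y : R} : y ∈ leftColon P b ↔ ∀ r, y * r * b ∈ P :=
  mem_mk' ..

theorem mem_rightColon {a y : R} : y ∈ rightColon P a ↔ ∀ r, a * r * y ∈ P :=
  mem_mk' ..

theorem le_leftColon (b : R) : P ≤ leftColon P b :=
  fun _ hy ↦ mem_leftColon.2 fun _ ↦ P.mul_mem_right _ _ (P.mul_mem_right _ _ hy)

theorem le_rightColon (a : R) : P ≤ rightColon P a :=
  fun _ hy ↦ mem_rightColon.2 fun _ ↦ P.mul_mem_left _ _ hy

theorem IsMSystem.isPrimeTwoSided_of_maximal {S : Set R} (hS : IsMSystem S)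
    (hP : Maximal (fun J : TwoSidedIdeal R ↦ Disjoint (J : Set R) S) P) :
    IsPrimeTwoSided P := by
  intro a b hab
  by_contra! ⟨haP, hbP⟩
  obtain ⟨s, hsb, hsS⟩ := exists_mem_of_maximal_twoSidedIdeal_disjoint hP (le_leftColon b)
    (mem_leftColon.2 hab) haP
  obtain ⟨t, hst, htS⟩ := exists_mem_of_maximal_twoSidedIdeal_disjoint hP (le_rightColon s)
    (mem_rightColon.2 (mem_leftColon.1 hsb)) hbP
  obtain ⟨r, hrS⟩ := hS s hsS t htS
  exact Set.disjoint_left.1 hP.prop (mem_rightColon.1 hst r) hrS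

theorem IsMSystem.exists_isPrimeTwoSided_disjoint {S : Set R} (hS : IsMSystem S)
    {I : TwoSidedIdeal R} (hI : Disjoint (I : Set R) S) :
    ∃ P, I ≤ P ∧ IsPrimeTwoSided P ∧ Disjoint (P : Set R) S :=
  let ⟨P, hIP, hP⟩ := exists_maximal_twoSidedIdeal_disjoint hI
  ⟨P, hIP, hS.isPrimeTwoSided_of_maximal hP, hP.prop⟩

theorem intersection_of_primes_eq_bot_of_idempotents_general
    (h : ∀ I : TwoSidedIdeal R, I ≠ ⊥ → ∃ S, IsMSystem S ∧ 0 ∉ S ∧ ∃ s ∈ I, s ∈ S) :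
    sInf {P : TwoSidedIdeal R | IsPrimeTwoSided P} = ⊥ := by
  by_contra hne
  obtain ⟨S, hS, h0, s, hs, hsS⟩ := h _ hne
  have disjoint_bot : Disjoint ((⊥ : TwoSidedIdeal R) : Set R) S := by
    rwa [coe_bot, Set.disjoint_singleton_left]
  obtain ⟨P, -, hP, hPS⟩ := hS.exists_isPrimeTwoSided_disjoint disjoint_bot
  exact Set.disjoint_left.1 hPS ((mem_sInf R).1 hs P hP) hsS

end Assoc

/-- If every nonzero two-sided ideal of a ring `R` contains a nonzero idempotent, then the
intersection of all prime two-sided ideals of `R` is zero (equivalently, `R` is a subdirect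
product of the quotients `R/P` over all prime two-sided ideals `P`).  Here a two-sided
ideal `P` is prime if `a * r * b ∈ P` for all `r : R` implies `a ∈ P` or `b ∈ P`. -/
theorem intersection_of_primes_eq_bot_of_idempotents {R : Type*} [Ring R]
    (h : ∀ I : TwoSidedIdeal R, I ≠ ⊥ → ∃ e : R, e ∈ I ∧ e ≠ 0 ∧ e * e = e) :
    ∀ x : R,
      (∀ P : TwoSidedIdeal R,
        (∀ a b : R, (∀ r : R, a * r * b ∈ P) → a ∈ P ∨ b ∈ P) → x ∈ P) →
      x = 0 := by
  have sInf_primes : sInf {P : TwoSidedIdeal R | IsPrimeTwoSided P} = ⊥ :=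
    intersection_of_primes_eq_bot_of_idempotents_general fun I hI ↦
      let ⟨e, heI, he0, hee⟩ := h I hI
      ⟨{e}, isMSystem_singleton hee, he0.symm, e, heI, rfl⟩
  exact fun x hx ↦ (mem_bot R).1 (sInf_primes ▸ (mem_sInf R).2 hx)
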